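/- arXiv:2305.07567 — 7 statements merged into one kernel-verified Lean document; each statement's English description precedes it below -/
import Mathlib

section
/- Let W = (L, f) be a weighted lattice with L modular and complemented, and let H be a coatom of L. Then, as polynomials in ℤ[z], P(W; z) = P(W|_H; z)·(P(W/H; z) + 1) − ∑_{b atom of L, b ≰ H} P(W/b; z). -/
/-- The characteristic polynomial of the minor `W([X,Y])` of the weighted lattice `W = (L, f)`:
`P(W([X,Y]); z) = ∑_{A ∈ L, X ≤ A ≤ Y} μ(X,A) · z^(f(Y) - f(A))`. -/
noncomputable def charPoly {L : Type*} [Lattice L] (μ : L → L → ℤ) (f : L → ℕ) (X Y : L) :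
    Polynomial ℤ :=
  ∑ᶠ A ∈ Set.Icc X Y, μ X A • ((Polynomial.X : Polynomial ℤ) ^ (f Y - f A))

open IncidenceAlgebra in
/-- The local Möbius function agrees with the library one. -/
lemma mu_agree {L : Type*} [PartialOrder L] [LocallyFiniteOrder L] [DecidableEq L] [Finite L]
    (μ : L → L → ℤ) (hμ_refl : ∀ x : L, μ x x = 1)
    (hμ_rec : ∀ x y : L, x < y → μ x y = -∑ᶠ z ∈ Set.Ico x y, μ x z) (x y : L) (h : x ≤ y) :
    μ x y = mu ℤ x y := by
  induction y using WellFoundedLT.induction with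
  | ind y ih =>
    rcases h.eq_or_lt with rfl | h'
    · simp [hμ_refl]
    · rw [hμ_rec x y h', mu_eq_neg_sum_Ico_of_ne h'.ne, ← Finset.coe_Ico,
        finsum_mem_coe_finset]
      congr 1
      apply Finset.sum_congr rfl
      intro z hz
      rw [Finset.mem_Ico] at hz
      exact ih z hz.2 hz.1

open IncidenceAlgebra in
/-- Dual Weisner theorem. -/
lemma dual_weisner {L : Type*} [Lattice L] [BoundedOrder L] [LocallyFiniteOrder L]
    [DecidableEq L] (H A : L) (hA : ¬ A ≤ H) :
    ∑ x ∈ Finset.Icc ⊥ A with x ⊓ H = ⊥, mu ℤ x A = 0 := by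
  classical
  calc ∑ x ∈ Finset.Icc ⊥ A with x ⊓ H = ⊥, mu ℤ x A
      = ∑ x ∈ Finset.Icc ⊥ A, ∑ y ∈ Finset.Icc ⊥ (x ⊓ H), mu ℤ ⊥ y * mu ℤ x A := by
        rw [Finset.sum_filter]
        apply Finset.sum_congr rfl
        intro x _
        rw [← Finset.sum_mul, sum_Icc_mu_right]
        by_cases h : x ⊓ H = ⊥
        · simp [h]
        · simp [h, Ne.symm h]
    _ = ∑ y ∈ Finset.Icc ⊥ (A ⊓ H), ∑ x ∈ Finset.Icc y A, mu ℤ ⊥ y * mu ℤ x A := by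
        apply Finset.sum_comm'
        intro x y
        simp only [Finset.mem_Icc, bot_le, true_and, le_inf_iff]
        constructor
        · rintro ⟨h1, h2, h3⟩
          exact ⟨⟨h2, h1⟩, h2.trans h1, h3⟩
        · rintro ⟨⟨h1, h2⟩, _, h3⟩
          exact ⟨h2, h1, h3⟩
    _ = 0 := by
        apply Finset.sum_eq_zero
        intro y hy
        rw [Finset.mem_Icc, le_inf_iff] at hy
        rw [← Finset.mul_sum, sum_Icc_mu_left, if_neg, mul_zero]
        rintro rfl
        exact hA hy.2.2

lemma isAtom_iff_of_coatom {L : Type*} [Lattice L] [BoundedOrder L] [IsModularLattice L]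
    (H : L) (hH : IsCoatom H) (x : L) : (IsAtom x ∧ ¬ x ≤ H) ↔ (x ⊓ H = ⊥ ∧ x ≠ ⊥) := by
  constructor
  · rintro ⟨h1, h2⟩
    refine ⟨?_, h1.1⟩
    rcases h1.le_iff.1 (inf_le_left : x ⊓ H ≤ x) with h | h
    · exact h
    · exact absurd (inf_eq_left.1 h) h2
  · rintro ⟨h1, h2⟩
    have h3 : ¬ x ≤ H := fun h => h2 (by rw [← h1, inf_eq_left.2 h])
    refine ⟨?_, h3⟩
    have hs : H ⊔ x = ⊤ := by
      rcases hH.le_iff.1 (le_sup_left : H ≤ H ⊔ x) with h | h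
      · exact h
      · exact absurd (h ▸ le_sup_right) h3
    have hc : IsCompl H x := ⟨disjoint_iff.2 (by rw [inf_comm, h1]), codisjoint_iff.2 hs⟩
    exact hc.isCoatom_iff_isAtom.1 hH

open IncidenceAlgebra in
lemma mu_bot_eq {L : Type*} [Lattice L] [BoundedOrder L] [IsModularLattice L]
    [Fintype L] [LocallyFiniteOrder L] [DecidableEq L]
    (H A : L) (hH : IsCoatom H) (hA : ¬ A ≤ H) (s : Finset L)
    (hs : ∀ b, b ∈ s ↔ (IsAtom b ∧ ¬ b ≤ H) ∧ b ≤ A) :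
    mu ℤ ⊥ A = - ∑ b ∈ s, mu ℤ b A := by
  have h := dual_weisner H A hA
  have : (Finset.Icc ⊥ A).filter (fun x => x ⊓ H = ⊥) = insert ⊥ s := by
    ext x
    simp only [Finset.mem_filter, Finset.mem_Icc, bot_le, true_and, Finset.mem_insert, hs,
      isAtom_iff_of_coatom H hH]
    by_cases hx : x = ⊥
    · simp [hx]
    · simp [hx, and_comm]
  rw [this, Finset.sum_insert (by rw [hs]; exact fun h => h.1.1.1 rfl)] at h
  linarith

lemma charPoly_eq_sum {L : Type*} [Lattice L] [LocallyFiniteOrder L] (μ : L → L → ℤ)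
    (f : L → ℕ) (x y : L) : charPoly μ f x y =
      ∑ A ∈ Finset.Icc x y, μ x A • ((Polynomial.X : Polynomial ℤ) ^ (f y - f A)) := by
  rw [charPoly, ← Finset.coe_Icc, finsum_mem_coe_finset]

/-- for a weighted lattice `W = (L, f)` with `L` a finite modular
(relatively) complemented lattice and `H` a coatom of `L`,
`P(W; z) = P(W|_H; z) · (P(W/H; z) + 1) - ∑_{b atom, b ≰ H} P(W/b; z)`. -/
theorem charPoly_coatom_decomposition
    {L : Type*} [Lattice L] [BoundedOrder L] [Finite L] [IsModularLattice L]
    (hcompl : ∀ a b c : L, a ≤ c → c ≤ b → ∃ d : L, c ⊓ d = a ∧ c ⊔ d = b)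
    (f : L → ℕ) (hf0 : f ⊥ = 0) (hfmono : Monotone f)
    (μ : L → L → ℤ)
    (hμ_refl : ∀ x : L, μ x x = 1)
    (hμ_rec : ∀ x y : L, x < y → μ x y = -∑ᶠ z ∈ Set.Ico x y, μ x z)
    (H : L) (hH : IsCoatom H) :
    charPoly μ f ⊥ ⊤ =
      charPoly μ f ⊥ H * (charPoly μ f H ⊤ + 1)
        - ∑ᶠ b ∈ {b : L | IsAtom b ∧ ¬ b ≤ H}, charPoly μ f b ⊤ := by
  classical
  have := Fintype.ofFinite L
  letI : LocallyFiniteOrder L := Fintype.toLocallyFiniteOrder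
  have hag := mu_agree μ hμ_refl hμ_rec
  set S : Finset L := Finset.univ.filter (fun b => IsAtom b ∧ ¬ b ≤ H) with hS
  have hset : {b : L | IsAtom b ∧ ¬ b ≤ H} = (S : Set L) := by
    ext b; simp [hS]
  rw [hset, finsum_mem_coe_finset]
  simp only [charPoly_eq_sum]
  have hHt : H < ⊤ := hH.lt_top
  have hIcc : Finset.Icc H ⊤ = {H, ⊤} := by
    ext x
    simp only [Finset.mem_Icc, le_top, and_true, Finset.mem_insert, Finset.mem_singleton,
      hH.le_iff]
    exact or_comm
  have hIco : Set.Ico H ⊤ = {H} := by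
    ext x
    simp only [Set.mem_Ico, Set.mem_singleton_iff, hH.le_iff, lt_top_iff_ne_top]
    constructor
    · rintro ⟨h1 | h1, h2⟩
      · exact absurd h1 h2
      · exact h1
    · rintro rfl
      exact ⟨Or.inr rfl, hHt.ne⟩
  have hmuH : μ H ⊤ = -1 := by
    rw [hμ_rec H ⊤ hHt, hIco, finsum_mem_singleton, hμ_refl]
  have hW : (∑ A ∈ Finset.Icc H ⊤, μ H A • ((Polynomial.X : Polynomial ℤ) ^ (f ⊤ - f A))) + 1
      = Polynomial.X ^ (f ⊤ - f H) := by
    rw [hIcc, Finset.sum_pair hHt.ne, hmuH, hμ_refl]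
    simp
  rw [hW, Finset.sum_mul]
  have h1 : ∀ A ∈ Finset.Icc ⊥ H, (μ ⊥ A • ((Polynomial.X : Polynomial ℤ) ^ (f H - f A)))
      * Polynomial.X ^ (f ⊤ - f H) = μ ⊥ A • ((Polynomial.X : Polynomial ℤ) ^ (f ⊤ - f A)) := by
    intro A hA
    rw [Finset.mem_Icc] at hA
    have ha := hfmono hA.2
    have hb := hfmono (le_top : H ≤ ⊤)
    rw [smul_mul_assoc, ← pow_add]
    congr 2
    omega
  rw [Finset.sum_congr rfl h1]
  have h2 : ∑ b ∈ S, ∑ A ∈ Finset.Icc b ⊤, μ b A • ((Polynomial.X : Polynomial ℤ) ^ (f ⊤ - f A))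
      = ∑ A ∈ (Finset.Icc ⊥ ⊤).filter (fun A => ¬ A ≤ H), ∑ b ∈ S.filter (fun b => b ≤ A),
        μ b A • ((Polynomial.X : Polynomial ℤ) ^ (f ⊤ - f A)) := by
    apply Finset.sum_comm'
    intro b A
    simp only [hS, Finset.mem_filter, Finset.mem_univ, true_and, Finset.mem_Icc, le_top, bot_le,
      and_true]
    constructor
    · rintro ⟨h, h'⟩
      exact ⟨⟨h, h'⟩, fun h'' => h.2 (h'.trans h'')⟩
    · rintro ⟨h, _⟩
      exact h
  have h3 : Finset.Icc ⊥ H = (Finset.Icc (⊥ : L) ⊤).filter (fun A => A ≤ H) := by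
    ext A; simp
  rw [h2, h3, ← Finset.sum_filter_add_sum_filter_not (Finset.Icc (⊥ : L) ⊤) (fun A => A ≤ H),
    sub_eq_add_neg, ← Finset.sum_neg_distrib]
  congr 1
  apply Finset.sum_congr rfl
  intro A hA
  have hA' : ¬ A ≤ H := (Finset.mem_filter.1 hA).2
  rw [hag ⊥ A bot_le, mu_bot_eq H A hH hA' (S.filter (fun b => b ≤ A)) (by simp [hS]),
    ← Finset.sum_smul, neg_smul]
  congr 2
  apply Finset.sum_congr rfl
  intro b hb
  exact (hag b A (Finset.mem_filter.1 hb).2).symm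
end

section
/- Let W = (L, f) be a weighted lattice with L modular and complemented, and let H be a coatom of L. Then: (1) P(W; z) = z^{f(⊤) − f(H)}·P(W|_H; z) − ∑_{y atom of L, y ≰ H} P(W/y; z) as polynomials in ℤ[z]; and (2) if H is not a flat of W, then P(W; z) = P(W|_H; z) − ∑_{y atom of L, y ≰ H} P(W/y; z). -/
open scoped Classical in
theorem aux_dual {L : Type*} [Lattice L] [Fintype L] (μ : L → L → ℤ)
    (hμ_refl : ∀ x : L, μ x x = 1)
    (hμ_rec : ∀ x y : L, x < y → μ x y = -∑ᶠ z ∈ Set.Ico x y, μ x z)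
    (v A : L) (h : v < A) : ∑ x : L with v ≤ x ∧ x ≤ A, μ x A = 0 := by
  have hrow : ∀ x y : L, x < y → ∑ z : L with x ≤ z ∧ z ≤ y, μ x z = 0 := by
    intro x y hxy
    have h1 := hμ_rec x y hxy
    rw [finsum_mem_eq_finite_toFinset_sum _ (Set.toFinite _)] at h1
    have h2 : (Finset.univ.filter fun z : L => x ≤ z ∧ z ≤ y)
        = insert y (Set.toFinite (Set.Ico x y)).toFinset := by
      ext z
      simp only [Finset.mem_filter, Finset.mem_univ, true_and, Finset.mem_insert,
        Set.Finite.mem_toFinset, Set.mem_Ico]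
      constructor
      · rintro ⟨ha, hb⟩
        rcases hb.eq_or_lt with e | e
        · exact Or.inl e
        · exact Or.inr ⟨ha, e⟩
      · rintro (rfl | ⟨ha, hb⟩)
        · exact ⟨hxy.le, le_rfl⟩
        · exact ⟨ha, hb.le⟩
    rw [h2, Finset.sum_insert (by simp), h1]
    ring
  let M : Matrix L L ℤ := fun x y => if x ≤ y then μ x y else 0
  let Z : Matrix L L ℤ := fun x y => if x ≤ y then 1 else 0
  have hMZ : M * Z = 1 := by
    ext x y
    have e : (M * Z) x y = ∑ z : L with x ≤ z ∧ z ≤ y, μ x z := by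
      rw [Matrix.mul_apply, Finset.sum_filter]
      refine Finset.sum_congr rfl fun z _ => ?_
      by_cases h1 : x ≤ z <;> by_cases h2 : z ≤ y <;> simp [M, Z, h1, h2]
    rw [e]
    by_cases hxy : x = y
    · subst hxy
      have : (Finset.univ.filter fun z : L => x ≤ z ∧ z ≤ x) = {x} := by
        ext z
        simp [le_antisymm_iff, and_comm]
      rw [this]
      simp [hμ_refl]
    · rw [Matrix.one_apply_ne hxy]
      by_cases hle : x ≤ y
      · exact hrow x y (lt_of_le_of_ne hle hxy)
      · apply Finset.sum_eq_zero
        intro z hz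
        simp only [Finset.mem_filter] at hz
        exact absurd (hz.2.1.trans hz.2.2) hle
  have hZM : Z * M = 1 := mul_eq_one_comm.mp hMZ
  have e := congrFun (congrFun hZM v) A
  rw [Matrix.one_apply_ne h.ne, Matrix.mul_apply] at e
  rw [← e, Finset.sum_filter]
  refine Finset.sum_congr rfl fun z _ => ?_
  by_cases h1 : v ≤ z <;> by_cases h2 : z ≤ A <;> simp [M, Z, h1, h2]

open scoped Classical in
theorem aux_weisner {L : Type*} [Lattice L] [Fintype L] (μ : L → L → ℤ)
    (hμ_refl : ∀ x : L, μ x x = 1)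
    (hμ_rec : ∀ x y : L, x < y → μ x y = -∑ᶠ z ∈ Set.Ico x y, μ x z)
    (H A : L) (h : ¬ A ≤ H) (w : L) : ∑ x : L with x ≤ A ∧ x ⊓ H = w, μ x A = 0 := by
  induction w using WellFoundedGT.induction with
  | _ w ih =>
  by_cases hw : w ≤ A ∧ w ≤ H
  · have hlt : w < A := lt_of_le_of_ne hw.1 (fun e => h (e ▸ hw.2))
    have h0 := aux_dual μ hμ_refl hμ_rec w A hlt
    rw [← Finset.sum_fiberwise _ (fun x => x ⊓ H), Finset.sum_eq_single w] at h0
    · rw [← h0, Finset.filter_filter]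
      refine Finset.sum_congr ?_ fun _ _ => rfl
      ext x
      simp only [Finset.mem_filter, Finset.mem_univ, true_and]
      constructor
      · rintro ⟨a, rfl⟩
        exact ⟨⟨inf_le_left, a⟩, rfl⟩
      · rintro ⟨⟨_, a⟩, b⟩
        exact ⟨a, b⟩
    · intro u _ hu
      rw [Finset.filter_filter]
      by_cases hwu : w ≤ u
      · rw [← ih u (lt_of_le_of_ne hwu hu.symm)]
        refine Finset.sum_congr ?_ fun _ _ => rfl
        ext x
        simp only [Finset.mem_filter, Finset.mem_univ, true_and]
        constructor
        · rintro ⟨⟨_, a⟩, b⟩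
          exact ⟨a, b⟩
        · rintro ⟨a, rfl⟩
          exact ⟨⟨hwu.trans inf_le_left, a⟩, rfl⟩
      · apply Finset.sum_eq_zero
        intro x hx
        simp only [Finset.mem_filter, Finset.mem_univ, true_and] at hx
        exact absurd (hx.2 ▸ le_inf hx.1.1 hw.2) hwu
    · simp
  · apply Finset.sum_eq_zero
    intro x hx
    simp only [Finset.mem_filter, Finset.mem_univ, true_and] at hx
    obtain ⟨a, rfl⟩ := hx
    exact absurd ⟨inf_le_left.trans a, inf_le_right⟩ hw

theorem aux_atom {L : Type*} [Lattice L] [BoundedOrder L] [IsModularLattice L]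
    (H : L) (hH : IsCoatom H) (x : L) :
    x ⊓ H = ⊥ ↔ x = ⊥ ∨ (IsAtom x ∧ ¬ x ≤ H) := by
  constructor
  · intro h
    by_cases hx : x ≤ H
    · left
      rwa [inf_eq_left.mpr hx] at h
    · right
      refine ⟨?_, hx⟩
      have h1 : x ⊔ H = ⊤ := by
        apply hH.2
        exact lt_of_le_of_ne le_sup_right fun e => hx (e ▸ le_sup_left)
      have hc : IsCompl x H := IsCompl.of_eq h h1
      exact hc.isAtom_iff_isCoatom.mpr hH
  · rintro (rfl | ⟨ha, hx⟩)
    · simp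
    · exact (ha.le_iff.mp inf_le_left).resolve_right (fun e => hx (inf_eq_left.mp e))

open scoped Classical in
theorem aux_mu {L : Type*} [Lattice L] [BoundedOrder L] [Fintype L] [IsModularLattice L]
    (μ : L → L → ℤ)
    (hμ_refl : ∀ x : L, μ x x = 1)
    (hμ_rec : ∀ x y : L, x < y → μ x y = -∑ᶠ z ∈ Set.Ico x y, μ x z)
    (H : L) (hH : IsCoatom H) (A : L) (h : ¬ A ≤ H) :
    μ ⊥ A = -∑ y : L with (IsAtom y ∧ ¬ y ≤ H) ∧ y ≤ A, μ y A := by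
  have h0 := aux_weisner μ hμ_refl hμ_rec H A h ⊥
  have h2 : (Finset.univ.filter fun x : L => x ≤ A ∧ x ⊓ H = ⊥)
      = insert ⊥ (Finset.univ.filter fun y : L => (IsAtom y ∧ ¬ y ≤ H) ∧ y ≤ A) := by
    ext x
    simp only [Finset.mem_filter, Finset.mem_univ, true_and, Finset.mem_insert, aux_atom H hH]
    constructor
    · rintro ⟨a, b | b⟩
      · exact Or.inl b
      · exact Or.inr ⟨b, a⟩
    · rintro (rfl | ⟨a, b⟩)
      · exact ⟨bot_le, Or.inl rfl⟩
      · exact ⟨b, Or.inr a⟩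
  rw [h2, Finset.sum_insert (by simp)] at h0
  linarith

open scoped Classical in
theorem aux_charPoly {L : Type*} [Lattice L] [Fintype L] (μ : L → L → ℤ) (f : L → ℕ) (X Y : L) :
    charPoly μ f X Y = ∑ A : L, if X ≤ A ∧ A ≤ Y then
      μ X A • ((Polynomial.X : Polynomial ℤ) ^ (f Y - f A)) else 0 := by
  rw [charPoly, finsum_mem_eq_finite_toFinset_sum _ (Set.toFinite _), ← Finset.sum_filter]
  refine Finset.sum_congr ?_ fun _ _ => rfl
  ext z
  simp

/-- for a weighted lattice `W = (L, f)` with `L` a finite modular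
(relatively) complemented lattice and `H` a coatom of `L`:
(1) `P(W; z) = z^(f ⊤ - f H) · P(W|_H; z) - ∑_{y atom, y ≰ H} P(W/y; z)`; and
(2) if `H` is not a flat of `W`, then
`P(W; z) = P(W|_H; z) - ∑_{y atom, y ≰ H} P(W/y; z)`. -/
theorem charPoly_coatom_restriction
    {L : Type*} [Lattice L] [BoundedOrder L] [Finite L] [IsModularLattice L]
    (hcompl : ∀ a b c : L, a ≤ c → c ≤ b → ∃ d : L, c ⊓ d = a ∧ c ⊔ d = b)
    (f : L → ℕ) (hf0 : f ⊥ = 0) (hfmono : Monotone f)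
    (μ : L → L → ℤ)
    (hμ_refl : ∀ x : L, μ x x = 1)
    (hμ_rec : ∀ x y : L, x < y → μ x y = -∑ᶠ z ∈ Set.Ico x y, μ x z)
    (H : L) (hH : IsCoatom H) :
    (charPoly μ f ⊥ ⊤ =
      (Polynomial.X : Polynomial ℤ) ^ (f ⊤ - f H) * charPoly μ f ⊥ H
        - ∑ᶠ y ∈ {y : L | IsAtom y ∧ ¬ y ≤ H}, charPoly μ f y ⊤)
    ∧ ((∃ A : L, H < A ∧ f A = f H) →
      charPoly μ f ⊥ ⊤ =
        charPoly μ f ⊥ H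
          - ∑ᶠ y ∈ {y : L | IsAtom y ∧ ¬ y ≤ H}, charPoly μ f y ⊤) := by
  classical
  haveI := Fintype.ofFinite L
  have key : charPoly μ f ⊥ ⊤ =
      (Polynomial.X : Polynomial ℤ) ^ (f ⊤ - f H) * charPoly μ f ⊥ H
        - ∑ᶠ y ∈ {y : L | IsAtom y ∧ ¬ y ≤ H}, charPoly μ f y ⊤ := by
    have hs : ∑ᶠ y ∈ {y : L | IsAtom y ∧ ¬ y ≤ H}, charPoly μ f y ⊤
        = ∑ y : L with IsAtom y ∧ ¬ y ≤ H, charPoly μ f y ⊤ := by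
      rw [finsum_mem_eq_finite_toFinset_sum _ (Set.toFinite _)]
      refine Finset.sum_congr ?_ fun _ _ => rfl
      ext z
      simp
    rw [hs]
    simp only [aux_charPoly]
    rw [Finset.sum_comm, Finset.mul_sum, ← Finset.sum_sub_distrib]
    refine Finset.sum_congr rfl fun A _ => ?_
    simp only [bot_le, le_top, true_and, and_true, if_true]
    by_cases hA : A ≤ H
    · rw [if_pos hA, Finset.sum_eq_zero, sub_zero, mul_smul_comm, ← pow_add]
      · congr 2
        have h1 := hfmono hA
        have h2 := hfmono (le_top : H ≤ ⊤)
        omega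
      · intro y hy
        simp only [Finset.mem_filter, Finset.mem_univ, true_and] at hy
        exact if_neg fun e => hy.2 (e.trans hA)
    · rw [if_neg hA, mul_zero, zero_sub, ← Finset.sum_filter, Finset.filter_filter,
        ← Finset.sum_smul, ← neg_smul, aux_mu μ hμ_refl hμ_rec H hH A hA]
  refine ⟨key, ?_⟩
  rintro ⟨A, hA, hf⟩
  have hT : A = ⊤ := hH.2 A hA
  subst hT
  rw [key, hf]
  simp
end

section
/- Let W = (L, f) be a weighted lattice with L modular and complemented. Suppose there exists θ ∈ ℝ with θ > 0 such that P(W([X,Y]); θ) ≥ 0 for all X ≤ Y in L. Let T ∈ L satisfy P(W/T; θ) > 0. Then for every complement U of T in L (i.e., U ∧ T = ⊥ and U ∨ T = ⊤), we have P(W|_U; θ) > 0. -/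
/-- The characteristic polynomial of the minor `W([X,Y])` of the weighted lattice `W = (L, f)`,
evaluated at a real number `θ`:
`P(W([X,Y]); θ) = ∑_{A ∈ L, X ≤ A ≤ Y} μ(X,A) · θ^(f(Y) - f(A))`. -/
noncomputable def charEval {L : Type*} [Lattice L] (μ : L → L → ℤ) (f : L → ℕ) (X Y : L)
    (θ : ℝ) : ℝ :=
  ∑ᶠ A ∈ Set.Icc X Y, (μ X A : ℝ) * θ ^ (f Y - f A)

/-- for a weighted lattice `W = (L, f)` with `L` a finite modular (relatively)
complemented lattice and `θ > 0` with `P(W([X,Y]); θ) ≥ 0` for all `X ≤ Y` (all minors):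
if `T ∈ L` satisfies `P(W/T; θ) > 0`, then for every complement `U` of `T`,
`P(W|_U; θ) > 0`. -/
theorem charEval_restriction_of_contraction_pos
    {L : Type*} [Lattice L] [BoundedOrder L] [Finite L] [IsModularLattice L]
    (hcompl : ∀ a b c : L, a ≤ c → c ≤ b → ∃ d : L, c ⊓ d = a ∧ c ⊔ d = b)
    (f : L → ℕ) (hf0 : f ⊥ = 0) (hfmono : Monotone f)
    (μ : L → L → ℤ)
    (hμ_refl : ∀ x : L, μ x x = 1)
    (hμ_rec : ∀ x y : L, x < y → μ x y = -∑ᶠ z ∈ Set.Ico x y, μ x z)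
    (θ : ℝ) (hθ : 0 < θ)
    (hminors : ∀ X Y : L, X ≤ Y → 0 ≤ charEval μ f X Y θ)
    (T : L) (hT : 0 < charEval μ f T ⊤ θ)
    (U : L) (hUT : U ⊓ T = ⊥) (hUT' : U ⊔ T = ⊤) :
    0 < charEval μ f ⊥ U θ := by
  classical
  haveI := Fintype.ofFinite L
  let M : Matrix L L ℝ := fun x y => if x ≤ y then (μ x y : ℝ) else 0
  let Z : Matrix L L ℝ := fun x y => if x ≤ y then 1 else 0
  have hsum : ∀ x y : L, ∑ z, (if x ≤ z ∧ z ≤ y then (μ x z : ℝ) else 0)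
      = if x = y then 1 else 0 := by
    intro x y
    by_cases hxy : x ≤ y
    · rcases hxy.eq_or_lt with rfl | hlt
      · rw [Finset.sum_eq_single x]
        · simp [hμ_refl]
        · intro b _ hb
          rw [if_neg]
          rintro ⟨h1, h2⟩
          exact hb (le_antisymm h2 h1)
        · simp
      · rw [if_neg hlt.ne]
        have h1 : ∑ z, (if x ≤ z ∧ z ≤ y then (μ x z : ℝ) else 0)
            = ∑ z, ((if x ≤ z ∧ z < y then (μ x z : ℝ) else 0)
              + if z = y then (μ x z : ℝ) else 0) := by
          refine Finset.sum_congr rfl fun z _ => ?_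
          by_cases hz : z = y
          · subst hz; simp [hxy]
          · simp [hz, lt_iff_le_and_ne]
        have h2 : μ x y = -∑ z, (if x ≤ z ∧ z < y then μ x z else 0) := by
          rw [hμ_rec x y hlt, finsum_eq_sum_of_fintype]
          congr 1
          refine Finset.sum_congr rfl fun z _ => ?_
          rw [finsum_eq_if]
          simp [Set.mem_Ico]
        rw [h1, Finset.sum_add_distrib]
        simp only [Finset.sum_ite_eq', Finset.mem_univ, if_true]
        rw [h2]
        push_cast
        ring
    · rw [if_neg (fun h => hxy h.le)]
      refine Finset.sum_eq_zero fun z _ => ?_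
      rw [if_neg]
      rintro ⟨h1, h2⟩
      exact hxy (h1.trans h2)
  have hMZ : M * Z = 1 := by
    ext x y
    rw [Matrix.mul_apply, Matrix.one_apply, ← hsum x y]
    refine Finset.sum_congr rfl fun z _ => ?_
    by_cases h1 : x ≤ z <;> by_cases h2 : z ≤ y <;> simp [M, Z, h1, h2]
  have hZM : Z * M = 1 := mul_eq_one_comm.mp hMZ
  have hP : ∀ X Y : L, charEval μ f X Y θ
      = ∑ A, if A ≤ Y then M X A * θ ^ (f Y - f A) else 0 := by
    intro X Y
    unfold charEval
    rw [finsum_eq_sum_of_fintype]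
    refine Finset.sum_congr rfl fun z _ => ?_
    rw [finsum_eq_if]
    by_cases h1 : X ≤ z <;> by_cases h2 : z ≤ Y <;> simp [M, h1, h2]
  have hinv : ∀ A : L, ∑ X, Z A X * charEval μ f X ⊤ θ = θ ^ (f ⊤ - f A) := by
    intro A
    simp only [hP, le_top, if_true, Finset.mul_sum]
    rw [Finset.sum_comm]
    have : ∀ B, ∑ X, Z A X * (M X B * θ ^ (f ⊤ - f B))
        = (if A = B then 1 else 0) * θ ^ (f ⊤ - f B) := by
      intro B
      rw [← Matrix.one_apply, ← hZM, Matrix.mul_apply, Finset.sum_mul]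
      simp only [mul_assoc]
    simp [this]
  have key : θ ^ (f ⊤ - f U) * charEval μ f ⊥ U θ
      = ∑ X, if ⊥ = U ⊓ X then charEval μ f X ⊤ θ else 0 := by
    have h1 : θ ^ (f ⊤ - f U) * charEval μ f ⊥ U θ
        = ∑ A, if A ≤ U then M ⊥ A * θ ^ (f ⊤ - f A) else 0 := by
      rw [hP, Finset.mul_sum]
      refine Finset.sum_congr rfl fun A _ => ?_
      split_ifs with h
      · have e : f ⊤ - f A = (f ⊤ - f U) + (f U - f A) := by
          have := hfmono h
          have := hfmono (le_top : U ≤ ⊤)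
          omega
        rw [e, pow_add]; ring
      · simp
    have h2 : ∀ X, (if ⊥ = U ⊓ X then charEval μ f X ⊤ θ else 0)
        = ∑ A, if A ≤ U then M ⊥ A * (Z A X * charEval μ f X ⊤ θ) else 0 := by
      intro X
      have : (if ⊥ = U ⊓ X then charEval μ f X ⊤ θ else 0)
          = (if ⊥ = U ⊓ X then 1 else 0) * charEval μ f X ⊤ θ := by simp
      rw [this, ← hsum, Finset.sum_mul]
      refine Finset.sum_congr rfl fun A _ => ?_
      by_cases h1 : A ≤ U <;> by_cases h2 : A ≤ X <;> simp [M, Z, h1, h2]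
    rw [h1, Finset.sum_congr rfl fun X _ => h2 X, Finset.sum_comm]
    refine Finset.sum_congr rfl fun A _ => ?_
    split_ifs with h
    · rw [← Finset.mul_sum, hinv]
    · simp
  have hpos : 0 < θ ^ (f ⊤ - f U) * charEval μ f ⊥ U θ := by
    rw [key]
    refine Finset.sum_pos' (fun X _ => ?_) ⟨T, Finset.mem_univ _, ?_⟩
    · split_ifs
      · exact hminors X ⊤ le_top
      · exact le_rfl
    · rw [if_pos hUT.symm]; exact hT
  exact pos_of_mul_pos_right hpos (pow_pos hθ _).le
end

section
/- Let W = (L, f) be a weighted lattice with L modular and complemented. Suppose there exists θ ∈ ℝ with θ > 0 such that P(W([X,Y]); θ) ≥ 0 for all X ≤ Y in L. Let U ∈ L satisfy P(W|_U; θ) > 0. Then there exist a complement V of U in L (i.e., V ∧ U = ⊥ and V ∨ U = ⊤) and an element T ≤ V such that P(W/T; θ) > 0. -/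
open Classical in
theorem mu_sum_aux {L : Type*} [Lattice L] [Fintype L] (μ : L → L → ℤ)
    (hμ_refl : ∀ x : L, μ x x = 1)
    (hμ_rec : ∀ x y : L, x < y → μ x y = -∑ᶠ z ∈ Set.Ico x y, μ x z) (x y : L) :
    (∑ z, if x ≤ z ∧ z ≤ y then (μ x z : ℝ) else 0) = if x = y then 1 else 0 := by
  by_cases hxy : x = y
  · subst hxy
    have : ∀ z : L, (x ≤ z ∧ z ≤ x) ↔ x = z :=
      fun z => ⟨fun h => le_antisymm h.1 h.2, fun h => by simp [h]⟩
    simp [this, hμ_refl]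
  · rw [if_neg hxy]
    by_cases hle : x ≤ y
    · have h := hμ_rec x y (lt_of_le_of_ne hle hxy)
      rw [finsum_mem_eq_finite_toFinset_sum _ (Set.toFinite _)] at h
      rw [← Finset.sum_filter]
      have e : Finset.filter (fun z => x ≤ z ∧ z ≤ y) Finset.univ
          = insert y (Set.toFinite (Set.Ico x y)).toFinset := by
        ext z
        simp only [Finset.mem_filter, Finset.mem_univ, true_and, Finset.mem_insert,
          Set.Finite.mem_toFinset, Set.mem_Ico]
        constructor
        · rintro ⟨h1, h2⟩
          rcases h2.eq_or_lt with h3 | h3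
          · exact Or.inl h3
          · exact Or.inr ⟨h1, h3⟩
        · rintro (rfl | ⟨h1, h2⟩)
          · exact ⟨hle, le_rfl⟩
          · exact ⟨h1, h2.le⟩
      rw [e, Finset.sum_insert (by simp), h]
      push_cast
      ring
    · apply Finset.sum_eq_zero
      intro z _
      rw [if_neg]
      exact fun h => hle (h.1.trans h.2)

open Classical in
theorem charEval_aux {L : Type*} [Lattice L] [Fintype L] (μ : L → L → ℤ) (f : L → ℕ)
    (hfmono : Monotone f) (X Y : L) (θ : ℝ) (hθ : 0 < θ) :
    charEval μ f X Y θ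
      = θ ^ f Y * ∑ A, if X ≤ A ∧ A ≤ Y then (μ X A : ℝ) * (θ ^ f A)⁻¹ else 0 := by
  unfold charEval
  rw [finsum_mem_eq_finite_toFinset_sum _ (Set.toFinite _), ← Finset.sum_filter, Finset.mul_sum]
  apply Finset.sum_congr
  · ext; simp
  · intro A hA
    have hA := (Finset.mem_filter.mp hA).2
    rw [pow_sub₀ _ hθ.ne' (hfmono hA.2)]
    ring

theorem charEval_contraction_of_restriction_pos
    {L : Type*} [Lattice L] [BoundedOrder L] [Finite L] [IsModularLattice L]
    (hcompl : ∀ a b c : L, a ≤ c → c ≤ b → ∃ d : L, c ⊓ d = a ∧ c ⊔ d = b)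
    (f : L → ℕ) (hf0 : f ⊥ = 0) (hfmono : Monotone f)
    (μ : L → L → ℤ)
    (hμ_refl : ∀ x : L, μ x x = 1)
    (hμ_rec : ∀ x y : L, x < y → μ x y = -∑ᶠ z ∈ Set.Ico x y, μ x z)
    (θ : ℝ) (hθ : 0 < θ)
    (hminors : ∀ X Y : L, X ≤ Y → 0 ≤ charEval μ f X Y θ)
    (U : L) (hU : 0 < charEval μ f ⊥ U θ) :
    ∃ V T : L, V ⊓ U = ⊥ ∧ V ⊔ U = ⊤ ∧ T ≤ V ∧ 0 < charEval μ f T ⊤ θ := by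
  classical
  haveI := Fintype.ofFinite L
  suffices h : ∃ T : L, T ⊓ U = ⊥ ∧ 0 < charEval μ f T ⊤ θ by
    obtain ⟨T, hT, hpos⟩ := h
    obtain ⟨d, hd1, hd2⟩ := hcompl ⊥ ⊤ (T ⊔ U) bot_le le_top
    refine ⟨T ⊔ d, T, ?_, ?_, le_sup_left, hpos⟩
    · have h1 : Disjoint U T := by rw [disjoint_iff, inf_comm]; exact hT
      have h2 : Disjoint (U ⊔ T) d := by rw [disjoint_iff, sup_comm]; exact hd1
      have h3 := h1.disjoint_sup_right_of_disjoint_sup_left h2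
      exact disjoint_iff.mp h3.symm
    · rw [sup_right_comm]; exact hd2
  have hmu := mu_sum_aux μ hμ_refl hμ_rec
  set g : L → ℝ := fun A => (θ ^ f A)⁻¹ with hg
  let M : Matrix L L ℝ := fun x y => if x ≤ y then (μ x y : ℝ) else 0
  let Z : Matrix L L ℝ := fun x y => if x ≤ y then 1 else 0
  have hMZ : M * Z = 1 := by
    ext x y
    rw [Matrix.mul_apply, Matrix.one_apply, ← hmu x y]
    apply Finset.sum_congr rfl
    intro z _
    by_cases h1 : x ≤ z <;> by_cases h2 : z ≤ y <;> simp [M, Z, h1, h2]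
  have hZM : Z * M = 1 := mul_eq_one_comm.mp hMZ
  let m : L → ℝ := M.mulVec g
  have hm : Z.mulVec m = g := by
    simp only [m, Matrix.mulVec_mulVec, hZM, Matrix.one_mulVec]
  have hgA : ∀ A, g A = ∑ S, if A ≤ S then m S else 0 := by
    intro A
    conv_lhs => rw [← hm]
    simp [Matrix.mulVec, dotProduct, Z]
  have hmS : ∀ S, charEval μ f S ⊤ θ = θ ^ f ⊤ * m S := by
    intro S
    rw [charEval_aux μ f hfmono S ⊤ θ hθ]
    congr 1
    simp [m, Matrix.mulVec, dotProduct, M, hg]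
  rw [charEval_aux μ f hfmono ⊥ U θ hθ] at hU
  have hU' := pos_of_mul_pos_right hU (by positivity)
  have key : (∑ A, if ⊥ ≤ A ∧ A ≤ U then (μ ⊥ A : ℝ) * (θ ^ f A)⁻¹ else 0)
      = ∑ S, if S ⊓ U = ⊥ then m S else 0 := by
    calc _ = ∑ A, ∑ S, (if ⊥ ≤ A ∧ A ≤ S ⊓ U then (μ ⊥ A : ℝ) else 0) * m S := by
          apply Finset.sum_congr rfl
          intro A _
          change (if ⊥ ≤ A ∧ A ≤ U then (μ ⊥ A : ℝ) * g A else 0) = _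
          rw [hgA A]
          by_cases h : A ≤ U
          · simp only [bot_le, h, true_and, if_true, le_inf_iff, and_true, Finset.mul_sum]
            apply Finset.sum_congr rfl
            intro S _
            split_ifs <;> simp
          · simp [h]
      _ = _ := by
          rw [Finset.sum_comm]
          apply Finset.sum_congr rfl
          intro S _
          rw [← Finset.sum_mul, hmu]
          simp [eq_comm]
  rw [key] at hU'
  obtain ⟨S, _, hS⟩ := Finset.exists_lt_of_sum_lt (s := Finset.univ) (f := fun _ : L => (0:ℝ))
    (g := fun S => if S ⊓ U = ⊥ then m S else 0) (by simpa using hU')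
  by_cases h : S ⊓ U = ⊥
  · refine ⟨S, h, ?_⟩
    rw [hmS]
    simp only [h, if_true] at hS
    positivity
  · simp [h] at hS
end

section
/- (Critical Theorem for q-polymatroids.) Let t be a positive integer, let C be an F_q-[n×m, k] rank-metric code, and let U be an F_q-subspace of F_q^n. Then the number of t-tuples (X_1, …, X_t) ∈ C^t such that colsp(X_1) + ⋯ + colsp(X_t) = U equals ∑_{V : Uᗮ ≤ V ≤ F_q^n} μ(Uᗮ, V)·|C_V|^t, where μ is the Möbius function of the lattice of F_q-subspaces of F_q^n. -/
open Matrix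

variable {F : Type*} [Field F] {n m : ℕ}

/-- Column space (support) of a matrix `X ∈ F^(n×m)`, as a subspace of `F^n`. -/
def colsp (X : Matrix (Fin n) (Fin m) F) : Submodule F (Fin n → F) :=
  LinearMap.range X.mulVecLin

/-- Orthogonal complement of a subspace of `F^n` w.r.t. the standard dot product. -/
def dotPerp (U : Submodule F (Fin n → F)) : Submodule F (Fin n → F) where
  carrier := {v | ∀ u ∈ U, ∑ i, u i * v i = 0}
  add_mem' := by
    intro a b ha hb u hu
    have : ∑ i, u i * (a + b) i = (∑ i, u i * a i) + ∑ i, u i * b i := by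
      simp [Pi.add_apply, mul_add, Finset.sum_add_distrib]
    simp only [Set.mem_setOf_eq] at *
    rw [this, ha u hu, hb u hu, add_zero]
  zero_mem' := by
    intro u hu
    simp
  smul_mem' := by
    intro c a ha u hu
    simp only [Set.mem_setOf_eq] at *
    have : ∑ i, u i * (c • a) i = c * ∑ i, u i * a i := by
      rw [Finset.mul_sum]
      refine Finset.sum_congr rfl fun i _ => ?_
      simp [Pi.smul_apply, smul_eq_mul]; ring
    rw [this, ha u hu, mul_zero]

theorem dotPerp_dotPerp (U : Submodule F (Fin n → F)) : dotPerp (dotPerp U) = U := by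
  have hB : (Matrix.toBilin' (1 : Matrix (Fin n) (Fin n) F)).Nondegenerate :=
    LinearMap.BilinForm.nondegenerate_toBilin'_of_det_ne_zero' _ (by simp)
  have happ : ∀ x y : Fin n → F,
      Matrix.toBilin' (1 : Matrix (Fin n) (Fin n) F) x y = ∑ i, x i * y i := by
    intro x y
    simp [Matrix.toBilin'_apply', dotProduct]
  have hR : (Matrix.toBilin' (1 : Matrix (Fin n) (Fin n) F)).IsRefl := by
    intro x y h
    rw [happ] at h ⊢
    rw [← h]
    exact Finset.sum_congr rfl fun i _ => mul_comm _ _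
  have hp : ∀ W : Submodule F (Fin n → F),
      dotPerp W = (Matrix.toBilin' (1 : Matrix (Fin n) (Fin n) F)).orthogonal W := by
    intro W
    ext v
    rw [LinearMap.BilinForm.mem_orthogonal_iff]
    refine forall₂_congr fun u _ => ?_
    rw [happ]
  rw [hp, hp]
  exact LinearMap.BilinForm.orthogonal_orthogonal hB hR U

theorem le_dotPerp_comm (U V : Submodule F (Fin n → F)) : U ≤ dotPerp V ↔ V ≤ dotPerp U := by
  constructor <;>
  · intro h a ha b hb
    rw [← h hb a ha]
    exact Finset.sum_congr rfl fun i _ => mul_comm _ _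

/-- Critical Theorem for `q`-polymatroids: the number of `t`-tuples of
codewords of `C` whose supports sum to `U` equals `∑_{V ≥ Uᗮ} μ(Uᗮ, V) |C_V|^t`. -/
theorem critical_theorem
    [Fintype F] (hn : 0 < n) (hm : 0 < m)
    (t : ℕ) (ht : 0 < t)
    (C : Submodule F (Matrix (Fin n) (Fin m) F)) (k : ℕ) (hk : Module.finrank F C = k)
    (μ : Submodule F (Fin n → F) → Submodule F (Fin n → F) → ℤ)
    (hμ_refl : ∀ X, μ X X = 1)
    (hμ_rec : ∀ X Y, X < Y → μ X Y = -∑ᶠ Z ∈ Set.Ico X Y, μ X Z)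
    (U : Submodule F (Fin n → F)) :
    (Nat.card {x : Fin t → C // (⨆ i, colsp ((x i : Matrix (Fin n) (Fin m) F))) = U} : ℤ)
      = ∑ᶠ V ∈ Set.Icc (dotPerp U) ⊤,
          μ (dotPerp U) V *
            (Nat.card {X : Matrix (Fin n) (Fin m) F // X ∈ C ∧ colsp X ≤ dotPerp V} : ℤ) ^ t := by
  classical
  have hfS : Finite (Submodule F (Fin n → F)) :=
    Finite.of_injective (fun W => (W : Set (Fin n → F))) SetLike.coe_injective
  letI : Fintype (Submodule F (Fin n → F)) := Fintype.ofFinite _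
  letI : Fintype C := Fintype.ofFinite _
  have key : ∀ A B : Submodule F (Fin n → F),
      ∑ V, (if A ≤ V ∧ V ≤ B then μ A V else 0) = if A = B then 1 else 0 := by
    intro A B
    by_cases hAB : A = B
    · subst hAB
      rw [if_pos rfl, Finset.sum_eq_single A]
      · simp [hμ_refl]
      · intro V _ hV
        rw [if_neg]
        rintro ⟨h1, h2⟩
        exact hV (le_antisymm h2 h1)
      · simp
    · rw [if_neg hAB]
      by_cases hle : A ≤ B
      · have hlt : A < B := lt_of_le_of_ne hle hAB
        have h1 := hμ_rec A B hlt
        rw [finsum_mem_def, finsum_eq_sum_of_fintype] at h1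
        have h2 : ∀ V, (if A ≤ V ∧ V ≤ B then μ A V else 0)
            = (Set.Ico A B).indicator (fun Z => μ A Z) V + if V = B then μ A B else 0 := by
          intro V
          by_cases hV : V = B
          · subst hV
            simp [hle]
          · have : V ≤ B ↔ V < B := ⟨fun h => lt_of_le_of_ne h hV, le_of_lt⟩
            simp [Set.indicator, hV, this]
        rw [Finset.sum_congr rfl fun V _ => h2 V, Finset.sum_add_distrib]
        simp only [Finset.sum_ite_eq', Finset.mem_univ, if_true]
        linarith
      · refine Finset.sum_eq_zero fun V _ => if_neg ?_
        rintro ⟨h1, h2⟩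
        exact hle (h1.trans h2)
  have hcount : ∀ V : Submodule F (Fin n → F),
      (Nat.card {X : Matrix (Fin n) (Fin m) F // X ∈ C ∧ colsp X ≤ dotPerp V} : ℤ) ^ t
      = ∑ x : Fin t → C, if V ≤ dotPerp (⨆ i, colsp (x i : Matrix (Fin n) (Fin m) F))
          then 1 else 0 := by
    intro V
    have e1 : {X : Matrix (Fin n) (Fin m) F // X ∈ C ∧ colsp X ≤ dotPerp V} ≃
        {X : C // colsp (X : Matrix (Fin n) (Fin m) F) ≤ dotPerp V} :=
      (Equiv.subtypeSubtypeEquivSubtypeInter (fun X => X ∈ C)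
        (fun X => colsp X ≤ dotPerp V)).symm
    have e2 : {x : Fin t → C // V ≤ dotPerp (⨆ i, colsp (x i : Matrix (Fin n) (Fin m) F))} ≃
        (Fin t → {X : C // colsp (X : Matrix (Fin n) (Fin m) F) ≤ dotPerp V}) :=
      (Equiv.subtypeEquivRight (fun x => by
        rw [← le_dotPerp_comm, iSup_le_iff])).trans
        (Equiv.subtypePiEquivPi (p := fun (_ : Fin t) (X : C) =>
          colsp (X : Matrix (Fin n) (Fin m) F) ≤ dotPerp V))
    rw [Nat.card_congr e1, Finset.sum_boole, ← Fintype.card_subtype, ← Nat.card_eq_fintype_card,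
      Nat.card_congr e2, Nat.card_fun]
    simp
  rw [finsum_mem_def, finsum_eq_sum_of_fintype]
  have hL : (Nat.card {x : Fin t → C //
      (⨆ i, colsp ((x i : Matrix (Fin n) (Fin m) F))) = U} : ℤ)
      = ∑ x : Fin t → C, if dotPerp U = dotPerp (⨆ i, colsp (x i : Matrix (Fin n) (Fin m) F))
          then 1 else 0 := by
    rw [Finset.sum_boole, ← Fintype.card_subtype, ← Nat.card_eq_fintype_card]
    congr 1
    refine Nat.card_congr (Equiv.subtypeEquivRight fun x => ?_)
    constructor
    · intro h
      rw [h]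
    · intro h
      rw [← dotPerp_dotPerp U, h, dotPerp_dotPerp]
  rw [hL, Finset.sum_congr rfl fun x _ => (key _ _).symm, Finset.sum_comm]
  refine Finset.sum_congr rfl fun V _ => ?_
  by_cases hV : dotPerp U ≤ V
  · rw [Set.indicator_of_mem (show V ∈ Set.Icc (dotPerp U) ⊤ from ⟨hV, le_top⟩), hcount,
      Finset.mul_sum]
    refine Finset.sum_congr rfl fun x _ => ?_
    simp [hV]
  · rw [Set.indicator_of_notMem (fun h => hV h.1)]
    simp [hV]
end

section
/- Let C be a non-degenerate F_{q^m}-[n, k] rank-metric code with generator matrix G (a k×n matrix over F_{q^m} whose rows form an F_{q^m}-basis of C), and let U ≤ F_{q^m}^k be the F_q-span of the columns of G. Then the critical exponent crit(M[C]) equals the minimum number r of F_{q^m}-hyperplanes H_1, …, H_r of F_{q^m}^k (i.e., F_{q^m}-subspaces of dimension k−1) such that U ∩ H_1 ∩ ⋯ ∩ H_r = 0. -/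
/-- The support of a vector `x ∈ K^n` over the subfield `F`: the `F`-subspace of `F^n`
consisting of all `(λ(x_1), …, λ(x_n))` for `λ ∈ Hom_F(K, F)`. -/
def vsupp (F : Type*) {K : Type*} [Field F] [Field K] [Algebra F K] {n : ℕ}
    (x : Fin n → K) : Submodule F (Fin n → F) :=
  LinearMap.range
    ({ toFun := fun φ : K →ₗ[F] F => fun i => φ (x i)
       map_add' := by intro φ ψ; ext i; simp
       map_smul' := by intro c φ; ext i; simp } : (K →ₗ[F] F) →ₗ[F] (Fin n → F))

theorem vsupp_le_iff {F K : Type*} [Field F] [Field K] [Algebra F K] {n : ℕ}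
    (x : Fin n → K) (g : (Fin n → F) →ₗ[F] F) :
    vsupp F x ≤ LinearMap.ker g ↔ ∑ j, g (Pi.single j 1) • x j = 0 := by
  have key : ∀ φ : K →ₗ[F] F, g (fun i => φ (x i)) = φ (∑ j, g (Pi.single j 1) • x j) := by
    intro φ
    rw [LinearMap.pi_apply_eq_sum_univ g]
    simp only [map_sum, map_smul, smul_eq_mul]
    refine Finset.sum_congr rfl fun j _ => ?_
    rw [mul_comm]
    congr 2
    ext i
    simp [Pi.single_apply, eq_comm]
  constructor
  · intro h
    rw [← Module.forall_dual_apply_eq_zero_iff F]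
    intro φ
    rw [← key φ]
    exact h ⟨φ, rfl⟩
  · rintro h _ ⟨φ, rfl⟩
    change g (fun i => φ (x i)) = 0
    rw [key, h, map_zero]

theorem iSup_vsupp_eq_top_iff {F K : Type*} [Field F] [Field K] [Algebra F K] {n : ℕ}
    {ι : Type*} (x : ι → Fin n → K) :
    (⨆ i, vsupp F (x i)) = ⊤ ↔
      ∀ a : Fin n → F, (∀ i, ∑ j, a j • x i j = 0) → a = 0 := by
  constructor
  · intro h a ha
    let g : (Fin n → F) →ₗ[F] F := ∑ j, a j • LinearMap.proj j
    have hg : ∀ j, g (Pi.single j 1) = a j := by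
      intro j
      simp [g, Pi.single_apply]
    have : (⊤ : Submodule F (Fin n → F)) ≤ LinearMap.ker g := by
      rw [← h, iSup_le_iff]
      intro i
      rw [vsupp_le_iff]
      simpa [hg] using ha i
    ext j
    rw [← hg j]
    exact this (Submodule.mem_top (x := Pi.single j 1))
  · intro h
    by_contra hne
    obtain ⟨f, hf, hle⟩ := Submodule.exists_le_ker_of_lt_top _ (lt_top_iff_ne_top.2 hne)
    apply hf
    have h0 := h (fun j => f (Pi.single j 1)) fun i =>
      (vsupp_le_iff (x i) f).1 ((le_iSup (fun i => vsupp F (x i)) i).trans hle)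
    refine LinearMap.pi_ext' fun j => LinearMap.ext_ring ?_
    simpa using congrFun h0 j

theorem finrank_ker_dual {K : Type*} [Field K] {k : ℕ} (f : (Fin k → K) →ₗ[K] K) (hf : f ≠ 0) :
    Module.finrank K (LinearMap.ker f) = k - 1 := by
  have h1 := LinearMap.finrank_range_add_finrank_ker f
  rw [LinearMap.range_eq_top.2 (LinearMap.surjective hf)] at h1
  simp at h1
  omega

/-- geometric description of the critical exponent of the `q`-matroid of a
non-degenerate `F_{q^m}`-`[n,k]` rank-metric code `C` with generator matrix `G`: it equals
the least number `r` of `F_{q^m}`-hyperplanes of `F_{q^m}^k` whose intersection meets the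
associated `q`-system `U` (the `F_q`-span of the columns of `G`) trivially. -/
theorem crit_eq_min_hyperplanes
    {F K : Type*} [Field F] [Fintype F] [Field K] [Fintype K] [Algebra F K]
    {n k : ℕ} (hn : 0 < n) (hk : 0 < k)
    (C : Submodule K (Fin n → K)) (hC : Module.finrank K C = k)
    (hnondeg : (⨆ x : C, vsupp F (x : Fin n → K)) = ⊤)
    (G : Matrix (Fin k) (Fin n) K)
    (hGspan : Submodule.span K (Set.range fun i : Fin k => G i) = C)
    (hGli : LinearIndependent K (fun i : Fin k => G i))
    (U : Submodule F (Fin k → K))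
    (hU : U = Submodule.span F (Set.range fun j : Fin n => fun i : Fin k => G i j)) :
    sInf {t : ℕ | 0 < t ∧
        ∃ x : Fin t → C, (⨆ i, vsupp F ((x i : Fin n → K))) = ⊤}
      = sInf {r : ℕ | ∃ H : Fin r → Submodule K (Fin k → K),
          (∀ i, Module.finrank K (H i) = k - 1) ∧
          U ⊓ (⨅ i, (H i).restrictScalars F) = ⊥} := by
  have hcol : ∀ (f : (Fin k → K) →ₗ[K] K) (a : Fin n → F),
      ∑ j, a j • f (fun i => G i j) = f (∑ j, a j • fun i => G i j) := by
    intro f a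
    rw [map_sum]
    exact Finset.sum_congr rfl fun j _ => (LinearMap.map_smul_of_tower f _ _).symm
  have hfC : ∀ f : (Fin k → K) →ₗ[K] K, (fun j => f (fun i => G i j)) ∈ C := by
    intro f
    rw [← hGspan, Submodule.mem_span_range_iff_exists_fun]
    refine ⟨fun i => f (Pi.single i 1), ?_⟩
    ext j
    rw [LinearMap.pi_apply_eq_sum_univ f]
    simp only [Finset.sum_apply, Pi.smul_apply, smul_eq_mul]
    refine Finset.sum_congr rfl fun i _ => ?_
    rw [mul_comm]
    congr 2
    ext l
    simp [Pi.single_apply, eq_comm]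
  have hCf : ∀ x : C, ∃ f : (Fin k → K) →ₗ[K] K,
      (x : Fin n → K) = fun j => f (fun i => G i j) := by
    rintro ⟨x, hx⟩
    rw [← hGspan, Submodule.mem_span_range_iff_exists_fun] at hx
    obtain ⟨c, rfl⟩ := hx
    refine ⟨∑ i, c i • LinearMap.proj i, ?_⟩
    ext j
    simp
  have hU' : ∀ u, u ∈ U ↔ ∃ a : Fin n → F, ∑ j, a j • (fun i => G i j) = u := by
    intro u
    rw [hU, Submodule.mem_span_range_iff_exists_fun]
  have hinj : ∀ a : Fin n → F, ∑ j, a j • (fun i => G i j) = 0 → a = 0 := by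
    intro a ha
    refine (iSup_vsupp_eq_top_iff (fun x : C => (x : Fin n → K))).1 hnondeg a fun x => ?_
    obtain ⟨f, hf⟩ := hCf x
    rw [hf]
    change ∑ j, a j • f (fun i => G i j) = 0
    rw [hcol, ha, map_zero]
  congr 1
  ext t
  constructor
  · rintro ⟨-, x, hx⟩
    rw [iSup_vsupp_eq_top_iff (fun i => (x i : Fin n → K))] at hx
    have hex : ∀ i, ∃ g : (Fin k → K) →ₗ[K] K, g ≠ 0 ∧
        ∀ a : Fin n → F, g (∑ j, a j • fun i => G i j) = 0 →
          ∑ j, a j • (x i : Fin n → K) j = 0 := by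
      intro i
      obtain ⟨f, hf⟩ := hCf (x i)
      by_cases h0 : f = 0
      · refine ⟨LinearMap.proj ⟨0, hk⟩, ?_, ?_⟩
        · intro h
          have := LinearMap.congr_fun h (fun _ => 1)
          simp at this
        · intro a _
          rw [hf, h0]
          simp
      · refine ⟨f, h0, fun a ha => ?_⟩
        rw [hf, ← ha, ← hcol]
    choose g hg0 hg using hex
    refine ⟨fun i => LinearMap.ker (g i), fun i => finrank_ker_dual _ (hg0 i), ?_⟩
    rw [eq_bot_iff]
    rintro u ⟨hu, hH⟩
    obtain ⟨a, rfl⟩ := (hU' u).1 hu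
    have ha : a = 0 := hx a fun i => hg i a (by
      have := (Submodule.mem_iInf _).1 hH i
      simpa using this)
    simp [ha]
  · rintro ⟨H, hH, hbot⟩
    have hex : ∀ i, ∃ g : (Fin k → K) →ₗ[K] K, H i = LinearMap.ker g := by
      intro i
      have hlt : H i < ⊤ := by
        rw [lt_top_iff_ne_top]
        intro h
        have := hH i
        rw [h] at this
        simp at this
        omega
      obtain ⟨f, hf, hle⟩ := Submodule.exists_le_ker_of_lt_top _ hlt
      exact ⟨f, Submodule.eq_of_le_of_finrank_eq hle
        ((hH i).trans (finrank_ker_dual f hf).symm)⟩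
    choose g hg using hex
    have hmain : ∀ a : Fin n → F, (∀ i, g i (∑ j, a j • fun l => G l j) = 0) → a = 0 := by
      intro a ha
      apply hinj
      rw [← Submodule.mem_bot F, ← hbot]
      refine ⟨(hU' _).2 ⟨a, rfl⟩, (Submodule.mem_iInf _).2 fun i => ?_⟩
      rw [Submodule.restrictScalars_mem, hg i]
      exact ha i
    refine ⟨?_, fun i => ⟨_, hfC (g i)⟩, ?_⟩
    · rcases Nat.eq_zero_or_pos t with rfl | h
      · have := congrFun (hmain (fun _ => 1) fun i => i.elim0) ⟨0, hn⟩
        simp at this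
      · exact h
    · rw [iSup_vsupp_eq_top_iff]
      intro a ha
      refine hmain a fun i => ?_
      rw [← hcol]
      exact ha i
end

section
/- Let C be an F_q-[n×m, k, d] MRD code, i.e., a k-dimensional F_q-subspace of F_q^{n×m} with minimum rank distance d = min{rank(X) : X ∈ C, X ≠ 0} satisfying k = max(n,m)·(min(n,m) − d + 1). Suppose one of the following holds: (1) n ≤ m; (2) m < n ≤ 2m − d; (3) k = n = m + 1. Then C is non-degenerate and the critical exponent of M[C] equals ⌈n/m⌉; that is, the least dimension of an F_q-subspace D ≤ C with supp(D) = F_q^n is ⌈n/m⌉. -/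
open Matrix

variable {F : Type*} [Field F] {n m : ℕ}

/-- The support of a subspace of matrices: the sum of the column spaces of its elements. -/
def suppCode (D : Submodule F (Matrix (Fin n) (Fin m) F)) : Submodule F (Fin n → F) :=
  ⨆ X : D, colsp (X : Matrix (Fin n) (Fin m) F)

/-- The minimum rank distance of a (nonzero) matrix code: the least rank
(= dimension of the column space) of a nonzero codeword. -/
noncomputable def minRankDist (C : Submodule F (Matrix (Fin n) (Fin m) F)) : ℕ :=
  sInf {r | ∃ X ∈ C, X ≠ 0 ∧ Module.finrank F (colsp X) = r}

/-- The critical exponent of a non-degenerate rank-metric code `C`: the least dimension of a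
subspace `D ≤ C` with `supp(D) = F_q^n`. -/
noncomputable def critExp (C : Submodule F (Matrix (Fin n) (Fin m) F)) : ℕ :=
  sInf {δ | ∃ D : Submodule F (Matrix (Fin n) (Fin m) F),
    D ≤ C ∧ Module.finrank F D = δ ∧ suppCode D = ⊤}

open Module in
theorem crit_aux_count {F M A : Type*} [Field F] [Fintype F] [AddCommGroup M] [Module F M]
    [FiniteDimensional F M] [AddCommGroup A] [Module F A] [FiniteDimensional F A]
    (C : Submodule F M) (K : A → Submodule F M) (e : ℕ) (hA : finrank F A ≤ e)
    (hK : ∀ a, a ≠ 0 → finrank F ↥(C ⊓ K a) + e ≤ finrank F C) :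
    ∃ x ∈ C, ∀ a, a ≠ 0 → x ∉ K a := by
  classical
  by_contra! hcon
  have : Finite M := Module.finite_of_finite F
  have : Finite A := Module.finite_of_finite F
  have : Fintype M := Fintype.ofFinite M
  have : Fintype A := Fintype.ofFinite A
  have hq : 1 < Fintype.card F := Fintype.one_lt_card
  have hcard : ∀ S : Submodule F M, (Finset.univ.filter (fun x => x ∈ S)).card
      = Fintype.card F ^ finrank F S := by
    intro S
    rw [← Module.card_eq_pow_finrank (K := F) (V := S), ← Fintype.card_subtype]
  have hsub : (Finset.univ.filter (fun x => x ∈ C)) ⊆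
      ((Finset.univ : Finset A).erase 0).biUnion
        (fun a => Finset.univ.filter (fun x => x ∈ C ⊓ K a)) := by
    intro x hx
    simp only [Finset.mem_filter, Finset.mem_univ, true_and] at hx
    obtain ⟨a, ha, hxa⟩ := hcon x hx
    simp only [Finset.mem_biUnion, Finset.mem_erase, Finset.mem_filter, Finset.mem_univ, true_and]
    exact ⟨a, ⟨ha, trivial⟩, hx, hxa⟩
  have h1 := (Finset.card_le_card hsub).trans Finset.card_biUnion_le
  rw [hcard C] at h1
  have h2 : ∀ a ∈ (Finset.univ : Finset A).erase 0,
      (Finset.univ.filter (fun x => x ∈ C ⊓ K a)).card ≤ Fintype.card F ^ (finrank F C - e) := by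
    intro a ha
    rw [hcard]
    have := hK a (Finset.ne_of_mem_erase ha)
    exact Nat.pow_le_pow_right (by omega) (by omega)
  have h3 := h1.trans (Finset.sum_le_card_nsmul _ _ _ h2)
  rw [Finset.card_erase_of_mem (Finset.mem_univ _), Finset.card_univ,
    Module.card_eq_pow_finrank (K := F) (V := A), smul_eq_mul] at h3
  by_cases ha : ∃ a : A, a ≠ 0
  · obtain ⟨a, ha⟩ := ha
    have hle := hK a ha
    have h4 : Fintype.card F ^ finrank F A ≤ Fintype.card F ^ e :=
      Nat.pow_le_pow_right (by omega) hA
    have h5 : Fintype.card F ^ finrank F C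
        = Fintype.card F ^ e * Fintype.card F ^ (finrank F C - e) := by
      rw [← pow_add]; congr 1; omega
    have h6 : 0 < Fintype.card F ^ (finrank F C - e) := by positivity
    have h7 : 0 < Fintype.card F ^ e := by positivity
    rw [h5] at h3
    have := Nat.le_of_mul_le_mul_right h3 h6
    omega
  · obtain ⟨a, ha', -⟩ := hcon 0 C.zero_mem
    exact ha ⟨a, ha'⟩

open Module in
theorem crit_aux_sub {F V : Type*} [Field F] [AddCommGroup V] [Module F V]
    [FiniteDimensional F V] (H : Submodule F V) (j : ℕ) (hj : j ≤ finrank F H) :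
    ∃ W ≤ H, finrank F W = j := by
  obtain ⟨f, hf⟩ := exists_linearIndependent_of_le_finrank hj
  have hg := hf.map' H.subtype (Submodule.ker_subtype H)
  refine ⟨Submodule.span F (Set.range (H.subtype ∘ f)), ?_, ?_⟩
  · rw [Submodule.span_le]
    rintro _ ⟨i, rfl⟩
    exact (f i).2
  · rw [finrank_span_eq_card hg, Fintype.card_fin]

open Module in
theorem crit_aux_compl {F V : Type*} [Field F] [AddCommGroup V] [Module F V]
    [FiniteDimensional F V] (x : V) (hx : x ≠ 0) (j : ℕ) (hj : j + 1 ≤ finrank F V) :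
    ∃ W : Submodule F V, finrank F W = j ∧ finrank F ↥(W ⊔ Submodule.span F {x}) = j + 1 := by
  obtain ⟨H, hH⟩ := Submodule.exists_isCompl (Submodule.span F {x})
  have h1 := Submodule.finrank_add_eq_of_isCompl hH
  have h2 := finrank_span_singleton (K := F) hx
  obtain ⟨W, hW, hWj⟩ := crit_aux_sub H j (by omega)
  refine ⟨W, hWj, ?_⟩
  have h3 := Submodule.finrank_sup_add_finrank_inf_eq W (Submodule.span F {x})
  have h4 : W ⊓ Submodule.span F {x} = ⊥ := by
    rw [← disjoint_iff]
    exact (hH.disjoint.mono_right hW).symm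
  rw [h4, finrank_bot] at h3
  omega

/-- The map `X ↦ p ∘ X ∘ i`. -/
def critSandwich {F E E' V V' : Type*} [Field F] [AddCommGroup E] [Module F E]
    [AddCommGroup E'] [Module F E'] [AddCommGroup V] [Module F V] [AddCommGroup V'] [Module F V']
    (i : E' →ₗ[F] E) (p : V →ₗ[F] V') : (E →ₗ[F] V) →ₗ[F] (E' →ₗ[F] V') where
  toFun X := p ∘ₗ X ∘ₗ i
  map_add' X Y := by ext; simp
  map_smul' c X := by ext; simp

open Module in
theorem crit_aux_bnd {F M Z : Type*} [Field F] [AddCommGroup M] [Module F M]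
    [AddCommGroup Z] [Module F Z] [FiniteDimensional F Z] (K : Submodule F M) (T : M →ₗ[F] Z)
    (h : ∀ x ∈ K, T x = 0 → x = 0) : finrank F K ≤ finrank F Z := by
  apply LinearMap.finrank_le_finrank_of_injective (f := T ∘ₗ K.subtype)
  rw [injective_iff_map_eq_zero]
  intro a ha
  exact Subtype.ext (h a a.2 ha)

section
open Module
variable {F E V : Type*} [Field F] [AddCommGroup E] [Module F E] [FiniteDimensional F E]
  [AddCommGroup V] [Module F V] [FiniteDimensional F V]

theorem crit_aux_exists_surj [Fintype F] (C : Submodule F (E →ₗ[F] V)) (d : ℕ) (hd0 : 0 < d)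
    (hd : ∀ X ∈ C, X ≠ 0 → d ≤ finrank F (LinearMap.range X)) (hdV : d ≤ finrank F V)
    (hk : finrank F C = finrank F E * (finrank F V - d + 1)) (hVE : finrank F V ≤ finrank F E) :
    ∃ X ∈ C, LinearMap.range X = ⊤ := by
  obtain ⟨X, hX, h⟩ := crit_aux_count (A := Dual F V) C
    (fun φ => LinearMap.ker (critSandwich (LinearMap.id : E →ₗ[F] E) φ)) (finrank F E)
    (by rw [Subspace.dual_finrank_eq]; exact hVE) (by
      intro φ hφ
      obtain ⟨x, hx⟩ : ∃ x, φ x ≠ 0 := by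
        by_contra! hc
        exact hφ (LinearMap.ext hc)
      obtain ⟨W, hW1, hW2⟩ := crit_aux_compl (F := F) x
        (by rintro rfl; simp at hx) (d - 1) (by omega)
      set P := W ⊔ Submodule.span F {x} with hP
      have hxP : x ∈ P := Submodule.mem_sup_right (Submodule.mem_span_singleton_self x)
      have h1 := crit_aux_bnd (C ⊓ LinearMap.ker (critSandwich (LinearMap.id : E →ₗ[F] E) φ))
        (critSandwich (LinearMap.id : E →ₗ[F] E) P.mkQ) (by
          rintro X ⟨hXC, hX⟩ hXP
          by_contra hX0
          have h2 := hd X hXC hX0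
          have h3 : LinearMap.range X < P := by
            refine lt_of_le_of_ne ?_ ?_
            · rintro _ ⟨y, rfl⟩
              have := LinearMap.congr_fun hXP y
              simpa [critSandwich] using this
            · intro he
              rw [← he] at hxP
              obtain ⟨y, rfl⟩ := hxP
              exact hx (LinearMap.congr_fun (LinearMap.mem_ker.1 hX) y)
          have := Submodule.finrank_lt_finrank_of_lt h3
          omega)
      have h2 := Submodule.finrank_quotient_add_finrank P
      rw [Module.finrank_linearMap, show finrank F (V ⧸ P) = finrank F V - d by omega] at h1
      rw [hk, Nat.mul_add, Nat.mul_one]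
      omega)
  refine ⟨X, hX, ?_⟩
  by_contra hne
  obtain ⟨φ, hφ, hle⟩ := Submodule.exists_le_ker_of_lt_top _ (lt_top_iff_ne_top.2 hne)
  refine h φ hφ (LinearMap.mem_ker.2 (LinearMap.ext fun y => ?_))
  exact hle ⟨y, rfl⟩

theorem crit_aux_exists_inj [Fintype F] (C : Submodule F (E →ₗ[F] V)) (d : ℕ) (hd0 : 0 < d)
    (hd : ∀ X ∈ C, X ≠ 0 → d ≤ finrank F (LinearMap.range X)) (hdE : d ≤ finrank F E)
    (hk : finrank F C = finrank F V * (finrank F E - d + 1)) (hEV : finrank F E ≤ finrank F V) :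
    ∃ X ∈ C, LinearMap.ker X = ⊥ := by
  obtain ⟨X, hX, h⟩ := crit_aux_count (A := E) C
    (fun u => LinearMap.ker (LinearMap.applyₗ (R := F) (M₂ := V) u)) (finrank F V) hEV (by
      intro u hu
      obtain ⟨W, hW1, hW2⟩ := crit_aux_compl (F := F) u hu (finrank F E - d) (by omega)
      have h1 := crit_aux_bnd (C ⊓ LinearMap.ker (LinearMap.applyₗ (R := F) (M₂ := V) u))
        (critSandwich W.subtype (LinearMap.id : V →ₗ[F] V)) (by
          rintro X ⟨hXC, hX⟩ hXW
          by_contra hX0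
          have h2 := hd X hXC hX0
          have h3 : W ⊔ Submodule.span F {u} ≤ LinearMap.ker X := by
            refine sup_le ?_ ?_
            · intro w hw
              exact LinearMap.congr_fun hXW ⟨w, hw⟩
            · rw [Submodule.span_singleton_le_iff_mem]
              exact hX
          have := Submodule.finrank_mono h3
          have := LinearMap.finrank_range_add_finrank_ker X
          omega)
      rw [Module.finrank_linearMap, hW1, Nat.mul_comm] at h1
      rw [hk, Nat.mul_add, Nat.mul_one]
      omega)
  refine ⟨X, hX, ?_⟩
  rw [LinearMap.ker_eq_bot']
  intro u hu
  by_contra hne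
  exact h u hne hu

theorem crit_aux_exists_pair [Fintype F] (C : Submodule F (E →ₗ[F] V)) (d : ℕ) (hd0 : 0 < d)
    (hd : ∀ X ∈ C, X ≠ 0 → d ≤ finrank F (LinearMap.range X)) (hdE : d ≤ finrank F E)
    (hk : finrank F C = finrank F V * (finrank F E - d + 1)) (hEV : finrank F E ≤ finrank F V)
    (hb : finrank F V + d ≤ 2 * finrank F E + 1) :
    ∃ X ∈ C, ∃ Y ∈ C, LinearMap.range X ⊔ LinearMap.range Y = ⊤ := by
  obtain ⟨X, hX, hXinj⟩ := crit_aux_exists_inj C d hd0 hd hdE hk hEV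
  have hr := LinearMap.finrank_range_add_finrank_ker X
  rw [hXinj, finrank_bot] at hr
  have ha := Subspace.finrank_add_finrank_dualAnnihilator_eq (LinearMap.range X)
  obtain ⟨Y, hY, h⟩ := crit_aux_count (A := (LinearMap.range X).dualAnnihilator) C
    (fun φ => LinearMap.ker (critSandwich (LinearMap.id : E →ₗ[F] E) (φ : Dual F V)))
    (finrank F E - d + 1) (by omega) (by
      rintro ⟨φ, hφX⟩ hφ'
      have hφ : φ ≠ 0 := fun h0 => hφ' (Subtype.ext h0)
      obtain ⟨x, hx⟩ : ∃ x, φ x ≠ 0 := by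
        by_contra! hc
        exact hφ (LinearMap.ext hc)
      have hx0 : x ≠ 0 := by rintro rfl; simp at hx
      obtain ⟨W, -, hW⟩ := crit_aux_sub (⊤ : Submodule F E) (finrank F E - d + 1)
        (by rw [finrank_top]; omega)
      have h1 := crit_aux_bnd (C ⊓ LinearMap.ker (critSandwich (LinearMap.id : E →ₗ[F] E) φ))
        (critSandwich W.subtype (Submodule.span F {x}).mkQ) (by
          rintro Z ⟨hZC, hZ⟩ hZP
          by_contra hZ0
          have h2 := hd Z hZC hZ0
          have h3 : W ≤ LinearMap.ker Z := by
            intro w hw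
            have h4 : Z w ∈ Submodule.span F {x} := by
              have := LinearMap.congr_fun hZP ⟨w, hw⟩
              rw [← Submodule.Quotient.mk_eq_zero]
              exact this
            obtain ⟨c, hc⟩ := Submodule.mem_span_singleton.1 h4
            have h5 : φ (Z w) = 0 := LinearMap.congr_fun (LinearMap.mem_ker.1 hZ) w
            rw [← hc, map_smul, smul_eq_mul] at h5
            rw [LinearMap.mem_ker, ← hc, (mul_eq_zero.1 h5).resolve_right hx, zero_smul]
          have := Submodule.finrank_mono h3
          have := LinearMap.finrank_range_add_finrank_ker Z
          omega)
      have h2 := Submodule.finrank_quotient_add_finrank (Submodule.span F {x})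
      rw [finrank_span_singleton hx0] at h2
      rw [Module.finrank_linearMap, hW] at h1
      rw [hk, ← h2, Nat.add_mul, Nat.one_mul, Nat.mul_comm (finrank F (V ⧸ _))]
      exact Nat.add_le_add_right h1 _)
  refine ⟨X, hX, Y, hY, ?_⟩
  by_contra hne
  obtain ⟨φ, hφ, hle⟩ := Submodule.exists_le_ker_of_lt_top _ (lt_top_iff_ne_top.2 hne)
  refine h ⟨φ, ?_⟩ (fun h0 => hφ (congrArg Subtype.val h0))
    (LinearMap.mem_ker.2 (LinearMap.ext fun y => ?_))
  · rw [Submodule.mem_dualAnnihilator]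
    exact fun w hw => hle (Submodule.mem_sup_left hw)
  · exact hle (Submodule.mem_sup_right ⟨y, rfl⟩)

end

theorem suppCode_mono_aux {F : Type*} [Field F] {n m : ℕ}
    {D C : Submodule F (Matrix (Fin n) (Fin m) F)} (h : D ≤ C) : suppCode D ≤ suppCode C :=
  iSup_le fun X => le_iSup (fun X : C => colsp (X : Matrix (Fin n) (Fin m) F)) ⟨X.1, h X.2⟩

theorem colsp_le_suppCode_aux {F : Type*} [Field F] {n m : ℕ}
    {D : Submodule F (Matrix (Fin n) (Fin m) F)} {X : Matrix (Fin n) (Fin m) F} (h : X ∈ D) :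
    colsp X ≤ suppCode D :=
  le_iSup (fun X : D => colsp (X : Matrix (Fin n) (Fin m) F)) ⟨X, h⟩

/-- A subspace of dimension at most one has support in the column space of one matrix. -/
theorem suppCode_le_of_finrank_le_one_aux {F : Type*} [Field F] {n m : ℕ}
    {D : Submodule F (Matrix (Fin n) (Fin m) F)} (h : Module.finrank F D ≤ 1) :
    ∃ X : Matrix (Fin n) (Fin m) F, suppCode D ≤ colsp X := by
  obtain ⟨X, hX⟩ := finrank_le_one_iff.1 h
  refine ⟨X, iSup_le fun Y => ?_⟩
  obtain ⟨c, rfl⟩ := hX Y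
  rintro _ ⟨y, rfl⟩
  exact ⟨c • y, by simp [Matrix.mulVec_smul, Matrix.smul_mulVec]⟩

/-- let `C` be an `F_q`-`[n×m, k, d]` MRD code
(`k = max(n,m)·(min(n,m) - d + 1)`).  If `n ≤ m`, or `m < n ≤ 2m - d`, or `k = n = m + 1`,
then `C` is non-degenerate and `crit(M[C]) = ⌈n/m⌉` (here `⌈n/m⌉ = (n + m - 1)/m`). -/
theorem crit_of_MRD
    [Fintype F] {k d : ℕ} (hn : 0 < n) (hm : 0 < m) (hd0 : 0 < d)
    (C : Submodule F (Matrix (Fin n) (Fin m) F)) (hC : C ≠ ⊥)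
    (hk : Module.finrank F C = k)
    (hd : d = minRankDist C)
    (hMRD : k = max n m * (min n m - d + 1))
    (hcases : n ≤ m ∨ (m < n ∧ n ≤ 2 * m - d) ∨ (k = n ∧ n = m + 1)) :
    suppCode C = ⊤ ∧ critExp C = (n + m - 1) / m := by
  classical
  have hdX : ∀ X ∈ C, X ≠ 0 → d ≤ Module.finrank F (colsp X) := fun X hX h0 => by
    rw [hd]
    exact Nat.sInf_le ⟨X, hX, h0, rfl⟩
  have hdn : d ≤ n ∧ d ≤ m := by
    obtain ⟨X, hX, h0⟩ := Submodule.exists_mem_ne_zero_of_ne_bot hC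
    have h1 := hdX X hX h0
    have h2 := Submodule.finrank_le (colsp X)
    have h3 := LinearMap.finrank_range_le X.mulVecLin
    simp only [Module.finrank_fin_fun] at h2 h3
    exact ⟨h1.trans h2, h1.trans h3⟩
  let C' := C.map (Matrix.toLin' (R := F) (m := Fin n) (n := Fin m)).toLinearMap
  have hC'k : Module.finrank F C' = k := by
    rw [← hk]
    exact LinearEquiv.finrank_map_eq _ _
  have hC'd : ∀ X ∈ C', X ≠ 0 → d ≤ Module.finrank F (LinearMap.range X) := by
    rintro _ ⟨X, hX, rfl⟩ h0
    exact hdX X hX (by rintro rfl; exact h0 (map_zero _))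
  -- it suffices to give a subspace of small dimension and bound the dimension from below
  suffices h : (∃ D ≤ C, Module.finrank F D ≤ (n + m - 1) / m ∧ suppCode D = ⊤) ∧
      ∀ D ≤ C, suppCode D = ⊤ → (n + m - 1) / m ≤ Module.finrank F D by
    obtain ⟨⟨D, hDC, hDk, hDs⟩, hlow⟩ := h
    refine ⟨top_le_iff.1 (hDs ▸ suppCode_mono_aux hDC), le_antisymm ?_ ?_⟩
    · have h1 : critExp C ≤ Module.finrank F D := Nat.sInf_le ⟨D, hDC, rfl, hDs⟩
      exact h1.trans hDk
    · refine le_csInf ⟨_, D, hDC, rfl, hDs⟩ ?_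
      rintro _ ⟨D', hD', rfl, hs⟩
      exact hlow D' hD' hs
  by_cases hnm : n ≤ m
  · have hceil : (n + m - 1) / m = 1 := by
      rw [Nat.div_eq_iff hm]
      omega
    rw [hceil]
    constructor
    · obtain ⟨_, ⟨X, hX, rfl⟩, ht⟩ := crit_aux_exists_surj C' d hd0 hC'd
        (by simpa using hdn.1)
        (by rw [hC'k, hMRD, max_eq_right hnm, min_eq_left hnm]; simp) (by simpa using hnm)
      refine ⟨Submodule.span F {X}, ?_, by
        have h1 := finrank_span_finset_le_card (R := F) ({X} : Finset (Matrix (Fin n) (Fin m) F))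
        rw [Finset.coe_singleton] at h1
        exact h1, ?_⟩
      · rw [Submodule.span_singleton_le_iff_mem]
        exact hX
      · exact top_le_iff.1 (ht.symm.le.trans
          (colsp_le_suppCode_aux (Submodule.mem_span_singleton_self X)))
    · intro D _ hs
      by_contra hlt
      have hD : D = ⊥ := Submodule.finrank_eq_zero.1 (by omega)
      subst hD
      have h0 : suppCode (⊥ : Submodule F (Matrix (Fin n) (Fin m) F)) = ⊥ := by
        refine le_bot_iff.1 (iSup_le fun X => ?_)
        have : (X : Matrix (Fin n) (Fin m) F) = 0 := (Submodule.mem_bot F).1 X.2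
        rw [this]
        rintro _ ⟨y, rfl⟩
        simp
      have h1 := congrArg (fun S : Submodule F (Fin n → F) => Module.finrank F S) (h0.symm.trans hs)
      simp at h1
      omega
  · have hmn : m < n := by omega
    rw [max_eq_left hmn.le, min_eq_right hmn.le] at hMRD
    have hb : n + d ≤ 2 * m + 1 := by
      rcases hcases with h | h | ⟨h1, h2⟩
      · omega
      · omega
      · rw [h1] at hMRD
        have : m - d + 1 = 1 := Nat.eq_of_mul_eq_mul_left hn (by omega)
        omega
    have hceil : (n + m - 1) / m = 2 := by
      rw [Nat.div_eq_iff hm]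
      omega
    rw [hceil]
    constructor
    · obtain ⟨_, ⟨X, hX, rfl⟩, _, ⟨Y, hY, rfl⟩, ht⟩ := crit_aux_exists_pair C' d hd0 hC'd
        (by simpa using hdn.2) (by rw [hC'k, hMRD]; simp) (by simpa using hmn.le)
        (by simpa using hb)
      refine ⟨Submodule.span F {X, Y}, ?_, ?_, ?_⟩
      · rw [Submodule.span_le]
        rintro Z (rfl | rfl)
        · exact hX
        · exact hY
      · have h1 := finrank_span_finset_le_card (R := F) ({X, Y} : Finset (Matrix (Fin n) (Fin m) F))
        rw [Finset.coe_pair] at h1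
        exact h1.trans Finset.card_le_two
      · refine top_le_iff.1 (ht.symm.le.trans (sup_le ?_ ?_))
        · exact colsp_le_suppCode_aux (X := X) (Submodule.subset_span (by simp))
        · exact colsp_le_suppCode_aux (X := Y) (Submodule.subset_span (by simp))
    · intro D _ hs
      by_contra hlt
      obtain ⟨X, hX⟩ := suppCode_le_of_finrank_le_one_aux (D := D) (by omega)
      rw [hs] at hX
      have h1 := Submodule.finrank_mono hX
      have h3 := LinearMap.finrank_range_le X.mulVecLin
      rw [finrank_top] at h1
      simp only [Module.finrank_fin_fun] at h1 h3
      exact absurd (h1.trans h3) (by omega)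
end
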